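/- Let μ be an unconditional log-concave measure on ℝⁿ and let A be an unconditional convex subset of ℝⁿ. Then for all α₁, α₂ > 0 and every λ ∈ [0,1], μ((1-λ)α₁A + λα₂A)^{1/n} ≥ (1-λ)μ(α₁A)^{1/n} + λ μ(α₂A)^{1/n}. -/

import Mathlib

open MeasureTheory Set Pointwise

/-- A function on ℝⁿ is unconditional if it is invariant under sign flips of coordinates. -/
def Unconditional (n : ℕ) (f : (Fin n → ℝ) → ℝ) : Prop :=
  ∀ (ε : Fin n → ℝ), (∀ i, ε i = 1 ∨ ε i = -1) →
    ∀ x : Fin n → ℝ, f (fun i => ε i * x i) = f x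

/-!
The substitution `x i = exp (t i)` turns coordinatewise weighted geometric means into convex
combinations, so the Prékopa–Leindler inequality in logarithmic coordinates yields
`μ(aA)^p μ(bA)^q ≤ μ(a^p b^q A)` for `p + q = 1`, that is, log-concavity of `t ↦ μ(eᵗA)`. On
the other hand `φ` decreases along rays, so `μ(bA) ≤ (b/a)ⁿ μ(aA)` for `a ≤ b`, and
`F(t) = μ(tA)^(1/n)` satisfies `F(a) ≤ F(b) ≤ (b/a) F(a)`. Hence the power function `K t^s`
that agrees with `F` at `a` and `b` has exponent `s ∈ [0, 1]`. It is concave, and by log-concavity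
it lies below `F` on `[a, b]`, so `F` lies above its chords. The theorem follows from
`((1-l)a + lb)A ⊆ (1-l)aA + lbA`.
-/

open scoped ENNReal

section BrunnMinkowski

variable {S T : Set ℝ}

lemma volume_add_volume_le_of_isGreatest_of_isLeast {s t : ℝ} (hs : IsGreatest S s)
    (ht : IsLeast T t) : volume S + volume T ≤ volume (S + T) := by
  -- The translates `S + t` and `s + T` lie in `S + T` and meet only in `s + t`.
  have left : volume S ≤ volume ((S + T) ∩ Iic (s + t)) := by
    rw [← measure_preimage_add_right volume (-t) S]
    refine measure_mono fun z hz ↦ ⟨?_, ?_⟩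
    · simpa using add_mem_add (mem_preimage.1 hz) ht.1
    · have : z + -t ≤ s := hs.2 hz
      exact mem_Iic.2 (by linarith)
  have right : volume T ≤ volume ((S + T) \ Iic (s + t)) := by
    rw [← measure_preimage_add volume (-s) T,
      ← measure_sdiff_null (s := (fun z ↦ -s + z) ⁻¹' T) (measure_singleton (s + t))]
    refine measure_mono fun z ⟨hz, hne⟩ ↦ ⟨?_, fun hle ↦ hne ?_⟩
    · simpa using add_mem_add hs.1 (mem_preimage.1 hz)
    · have : t ≤ -s + z := ht.2 hz
      exact le_antisymm hle (by linarith)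
  rw [← measure_inter_add_sdiff (S + T) (measurableSet_Iic (a := s + t))]
  gcongr

theorem volume_add_volume_le_volume_add (hS : MeasurableSet S) (hS₀ : S.Nonempty)
    (hT : MeasurableSet T) (hT₀ : T.Nonempty) : volume S + volume T ≤ volume (S + T) := by
  obtain ⟨s, hs⟩ := hS₀
  obtain ⟨t, ht⟩ := hT₀
  have compact_le (K : {K // K ⊆ S ∧ IsCompact K}) (L : {L // L ⊆ T ∧ IsCompact L}) :
      volume K.1 + volume L.1 ≤ volume (S + T) := by
    obtain ⟨k, hk⟩ := (K.2.2.insert s).exists_isGreatest (insert_nonempty s _)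
    obtain ⟨l, hl⟩ := (L.2.2.insert t).exists_isLeast (insert_nonempty t _)
    calc volume K.1 + volume L.1
        ≤ volume (insert s K.1) + volume (insert t L.1) := by gcongr <;> exact subset_insert _ _
      _ ≤ volume (insert s K.1 + insert t L.1) :=
          volume_add_volume_le_of_isGreatest_of_isLeast hk hl
      _ ≤ volume (S + T) :=
          measure_mono (add_subset_add (insert_subset hs K.2.1) (insert_subset ht L.2.1))
  have : Nonempty {K // K ⊆ S ∧ IsCompact K} := ⟨∅, empty_subset S, isCompact_empty⟩
  have : Nonempty {L // L ⊆ T ∧ IsCompact L} := ⟨∅, empty_subset T, isCompact_empty⟩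
  simpa only [hS.measure_eq_iSup_isCompact, hT.measure_eq_iSup_isCompact, iSup_subtype, iSup_and]
    using ENNReal.iSup_add_iSup_le compact_le

lemma ofReal_mul_volume_add_le_volume_smul_add_smul {p q : ℝ} (hp : 0 < p) (hq : 0 < q)
    (hS : MeasurableSet S) (hS₀ : S.Nonempty) (hT : MeasurableSet T) (hT₀ : T.Nonempty) :
    ENNReal.ofReal p * volume S + ENNReal.ofReal q * volume T ≤ volume (p • S + q • T) := by
  simpa [Measure.addHaar_smul, abs_of_pos, hp, hq] using
    volume_add_volume_le_volume_add (hS.const_smul₀ p) hS₀.smul_set (hT.const_smul₀ q) hT₀.smul_set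

end BrunnMinkowski

section LayerCake

variable {α : Type*} [MeasurableSpace α] {μ : Measure α} {f : α → ℝ≥0∞}

lemma volume_Ioi_inter_ofReal_lt (y : ℝ≥0∞) :
    volume (Ioi 0 ∩ {t : ℝ | ENNReal.ofReal t < y}) = y := by
  rcases eq_or_ne y ⊤ with rfl | hy
  · simp
  · have : Ioi 0 ∩ {t : ℝ | ENNReal.ofReal t < y} = Ioo 0 y.toReal := by
      ext t
      simp +contextual [ENNReal.ofReal_lt_iff_lt_toReal, hy, le_of_lt]
    simp [this, hy]

lemma measurable_measure_ofReal_lt : Measurable fun t : ℝ ↦ μ {x | ENNReal.ofReal t < f x} :=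
  Antitone.measurable fun _ _ hst ↦
    measure_mono fun _ hx ↦ (ENNReal.ofReal_le_ofReal hst).trans_lt hx

lemma lintegral_eq_lintegral_measure_ofReal_lt [SFinite μ] (hf : Measurable f) :
    ∫⁻ x, f x ∂μ = ∫⁻ t in Ioi (0 : ℝ), μ {x | ENNReal.ofReal t < f x} := by
  have meas : MeasurableSet {z : α × ℝ | ENNReal.ofReal z.2 < f z.1} :=
    measurableSet_lt (by fun_prop) (by fun_prop)
  calc ∫⁻ x, f x ∂μ
      = ∫⁻ x, (volume.restrict (Ioi (0 : ℝ))) {t | ENNReal.ofReal t < f x} ∂μ := by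
        refine lintegral_congr fun x ↦ ?_
        rw [Measure.restrict_apply' measurableSet_Ioi, inter_comm, volume_Ioi_inter_ofReal_lt]
    _ = (μ.prod (volume.restrict (Ioi 0))) {z | ENNReal.ofReal z.2 < f z.1} :=
        (Measure.prod_apply meas).symm
    _ = ∫⁻ t in Ioi (0 : ℝ), μ {x | ENNReal.ofReal t < f x} := Measure.prod_apply_symm meas

lemma lintegral_eq_iSup_lintegral_min_natCast (hf : Measurable f) :
    ∫⁻ x, f x ∂μ = ⨆ N : ℕ, ∫⁻ x, min (f x) N ∂μ := by
  rw [← lintegral_iSup (fun N ↦ hf.min measurable_const)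
    (fun N M hNM x ↦ min_le_min_left _ (Nat.cast_le.2 hNM))]
  simp_rw [← inf_iSup_eq, ENNReal.iSup_natCast, inf_top_eq]

end LayerCake

section PrekopaLeindler

variable {p q : ℝ}

lemma rpow_mul_rpow_le_ofReal_mul_add (hp : 0 < p) (hq : 0 < q) (hpq : p + q = 1)
    (a b : ℝ≥0∞) : a ^ p * b ^ q ≤ ENNReal.ofReal p * a + ENNReal.ofReal q * b := by
  have conjugate : p⁻¹.HolderConjugate q⁻¹ :=
    Real.holderConjugate_iff.2 ⟨(one_lt_inv₀ hp).2 (by linarith), by simpa using hpq⟩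
  simpa [ENNReal.rpow_rpow_inv, ENNReal.ofReal_inv_of_pos, hp, hq, hp.ne', hq.ne', div_eq_mul_inv,
    mul_comm] using ENNReal.young_inequality (a ^ p) (b ^ q) conjugate

lemma div_rpow_mul_div_rpow (hp : 0 ≤ p) (hq : 0 ≤ q) {M N : ℝ≥0∞} (hM : M ≠ 0) (hM' : M ≠ ⊤)
    (a b : ℝ≥0∞) : (a / M) ^ p * (b / N) ^ q = a ^ p * b ^ q / (M ^ p * N ^ q) := by
  have hMp : M ^ p ≠ 0 := by simp [hM, hM']
  rw [ENNReal.div_rpow_of_nonneg _ _ hp, ENNReal.div_rpow_of_nonneg _ _ hq,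
    ENNReal.mul_div_mul_comm (.inl hMp) (.inl (ENNReal.rpow_ne_top_of_nonneg hp hM'))]

variable {f g h : ℝ → ℝ≥0∞}

lemma ofReal_mul_lintegral_add_le_of_iSup_eq_one (hp : 0 < p) (hq : 0 < q) (hpq : p + q = 1)
    (hf : Measurable f) (hg : Measurable g) (hh : Measurable h)
    (hf₁ : ⨆ x, f x = 1) (hg₁ : ⨆ x, g x = 1)
    (H : ∀ x y, f x ^ p * g y ^ q ≤ h (p * x + q * y)) :
    ENNReal.ofReal p * (∫⁻ x, f x) + ENNReal.ofReal q * (∫⁻ x, g x) ≤ ∫⁻ x, h x := by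
  simp only [lintegral_eq_lintegral_measure_ofReal_lt, hf, hg, hh]
  rw [← lintegral_const_mul _ measurable_measure_ofReal_lt,
    ← lintegral_const_mul _ measurable_measure_ofReal_lt,
    ← lintegral_add_left (measurable_measure_ofReal_lt.const_mul _)]
  refine setLIntegral_mono measurable_measure_ofReal_lt fun t _ ↦ ?_
  rcases lt_or_ge (ENNReal.ofReal t) 1 with ht | ht
  · have hf_ne : {x | ENNReal.ofReal t < f x}.Nonempty := by
      simpa [Set.Nonempty] using lt_iSup_iff.1 (ht.trans_eq hf₁.symm)
    have hg_ne : {x | ENNReal.ofReal t < g x}.Nonempty := by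
      simpa [Set.Nonempty] using lt_iSup_iff.1 (ht.trans_eq hg₁.symm)
    have level_subset : p • {x | ENNReal.ofReal t < f x} + q • {x | ENNReal.ofReal t < g x}
        ⊆ {x | ENNReal.ofReal t < h x} := by
      rintro _ ⟨_, ⟨x, hx, rfl⟩, _, ⟨y, hy, rfl⟩, rfl⟩
      calc ENNReal.ofReal t
          = ENNReal.ofReal t ^ p * ENNReal.ofReal t ^ q := by
            rw [← ENNReal.rpow_add_of_nonneg _ _ hp.le hq.le, hpq, ENNReal.rpow_one]
        _ < f x ^ p * g y ^ q :=
            ENNReal.mul_lt_mul (ENNReal.rpow_lt_rpow hx hp) (ENNReal.rpow_lt_rpow hy hq)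
        _ ≤ h (p * x + q * y) := H x y
    exact (ofReal_mul_volume_add_le_volume_smul_add_smul hp hq
      (measurableSet_lt measurable_const hf) hf_ne
      (measurableSet_lt measurable_const hg) hg_ne).trans
      (measure_mono level_subset)
  · have hf_empty : {x | ENNReal.ofReal t < f x} = ∅ :=
      eq_empty_of_forall_notMem fun x hx ↦ (ht.trans_lt hx).not_ge (hf₁ ▸ le_iSup f x)
    have hg_empty : {x | ENNReal.ofReal t < g x} = ∅ :=
      eq_empty_of_forall_notMem fun x hx ↦ (ht.trans_lt hx).not_ge (hg₁ ▸ le_iSup g x)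
    simp [hf_empty, hg_empty]

lemma prekopa_leindler_of_iSup_ne_top (hp : 0 < p) (hq : 0 < q) (hpq : p + q = 1)
    (hf : Measurable f) (hg : Measurable g) (hh : Measurable h)
    (hf_top : ⨆ x, f x ≠ ⊤) (hg_top : ⨆ x, g x ≠ ⊤)
    (H : ∀ x y, f x ^ p * g y ^ q ≤ h (p * x + q * y)) :
    (∫⁻ x, f x) ^ p * (∫⁻ x, g x) ^ q ≤ ∫⁻ x, h x := by
  rcases eq_or_ne (⨆ x, f x) 0 with hf₀ | hf₀
  · simp [ENNReal.iSup_eq_zero.1 hf₀, hp]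
  rcases eq_or_ne (⨆ x, g x) 0 with hg₀ | hg₀
  · simp [ENNReal.iSup_eq_zero.1 hg₀, hq]
  set M := ⨆ x, f x
  set N := ⨆ x, g x
  have hc : M ^ p * N ^ q ≠ 0 := by simp [hf₀, hg₀, hf_top, hg_top]
  have hc_top : M ^ p * N ^ q ≠ ⊤ := by finiteness
  have normalized (x y : ℝ) :
      (f x / M) ^ p * (g y / N) ^ q ≤ h (p * x + q * y) / (M ^ p * N ^ q) := by
    rw [div_rpow_mul_div_rpow hp.le hq.le hf₀ hf_top]
    exact ENNReal.div_le_div_right (H x y) _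
  have normalized_le : (∫⁻ x, f x / M) ^ p * (∫⁻ x, g x / N) ^ q
      ≤ ∫⁻ x, h x / (M ^ p * N ^ q) :=
    (rpow_mul_rpow_le_ofReal_mul_add hp hq hpq _ _).trans <|
      ofReal_mul_lintegral_add_le_of_iSup_eq_one hp hq hpq (hf.div_const M) (hg.div_const N)
        (hh.div_const _) (by rw [← ENNReal.iSup_div, ENNReal.div_self hf₀ hf_top])
        (by rw [← ENNReal.iSup_div, ENNReal.div_self hg₀ hg_top]) normalized
  simp only [div_eq_mul_inv, lintegral_mul_const, hf, hg, hh] at normalized_le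
  simp only [← div_eq_mul_inv, div_rpow_mul_div_rpow hp.le hq.le hf₀ hf_top] at normalized_le
  rwa [ENNReal.div_le_iff hc hc_top, ENNReal.div_mul_cancel hc hc_top] at normalized_le

theorem prekopa_leindler (hp : 0 < p) (hq : 0 < q) (hpq : p + q = 1)
    (hf : Measurable f) (hg : Measurable g) (hh : Measurable h)
    (H : ∀ x y, f x ^ p * g y ^ q ≤ h (p * x + q * y)) :
    (∫⁻ x, f x) ^ p * (∫⁻ x, g x) ^ q ≤ ∫⁻ x, h x := by
  have truncated_le (M N : ℕ) :
      (∫⁻ x, min (f x) M) ^ p * (∫⁻ x, min (g x) N) ^ q ≤ ∫⁻ x, h x := by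
    refine prekopa_leindler_of_iSup_ne_top hp hq hpq (hf.min measurable_const)
      (hg.min measurable_const) hh ?_ ?_ fun x y ↦ le_trans ?_ (H x y)
    · exact ne_top_of_le_ne_top (ENNReal.natCast_ne_top M) (iSup_le fun x ↦ min_le_right _ _)
    · exact ne_top_of_le_ne_top (ENNReal.natCast_ne_top N) (iSup_le fun x ↦ min_le_right _ _)
    · gcongr <;> exact min_le_left _ _
  have rpow_iSup {r : ℝ} (hr : 0 < r) (u : ℕ → ℝ≥0∞) : (⨆ N, u N) ^ r = ⨆ N, u N ^ r :=
    (ENNReal.orderIsoRpow r hr).map_iSup u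
  rw [lintegral_eq_iSup_lintegral_min_natCast hf, lintegral_eq_iSup_lintegral_min_natCast hg,
    rpow_iSup hp, rpow_iSup hq, ENNReal.iSup_mul]
  refine iSup_le fun M ↦ ?_
  rw [ENNReal.mul_iSup]
  exact iSup_le fun N ↦ truncated_le M N

lemma lintegral_Ioi_zero_eq_lintegral_exp (u : ℝ → ℝ≥0∞) :
    ∫⁻ x in Ioi 0, u x = ∫⁻ x, ENNReal.ofReal (Real.exp x) * u (Real.exp x) := by
  simpa [Real.range_exp] using
    lintegral_image_eq_lintegral_abs_deriv_mul MeasurableSet.univ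
      (fun x _ ↦ (Real.hasDerivAt_exp x).hasDerivWithinAt) Real.exp_injective.injOn u

theorem prekopa_leindler_Ioi (hp : 0 < p) (hq : 0 < q) (hpq : p + q = 1)
    (hf : Measurable f) (hg : Measurable g) (hh : Measurable h)
    (H : ∀ x y, 0 < x → 0 < y → f x ^ p * g y ^ q ≤ h (x ^ p * y ^ q)) :
    (∫⁻ x in Ioi 0, f x) ^ p * (∫⁻ x in Ioi 0, g x) ^ q ≤ ∫⁻ x in Ioi 0, h x := by
  simp only [lintegral_Ioi_zero_eq_lintegral_exp]
  refine prekopa_leindler hp hq hpq (by fun_prop) (by fun_prop) (by fun_prop) fun x y ↦ ?_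
  have exp_combo : Real.exp (p * x + q * y) = Real.exp x ^ p * Real.exp y ^ q := by
    rw [Real.exp_add, ← Real.exp_mul, ← Real.exp_mul, mul_comm p, mul_comm q]
  rw [ENNReal.mul_rpow_of_nonneg _ _ hp.le, ENNReal.mul_rpow_of_nonneg _ _ hq.le,
    ENNReal.ofReal_rpow_of_pos x.exp_pos, ENNReal.ofReal_rpow_of_pos y.exp_pos, mul_mul_mul_comm,
    ← ENNReal.ofReal_mul (by positivity), exp_combo]
  gcongr
  exact H _ _ x.exp_pos y.exp_pos

lemma lintegral_eq_lintegral_Ioi_add_neg (hf : Measurable f) :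
    ∫⁻ x, f x = ∫⁻ x in Ioi 0, (f x + f (-x)) := by
  have neg_part : ∫⁻ x in Iic 0, f x = ∫⁻ x in Ioi 0, f (-x) := by
    rw [← (Measure.measurePreserving_neg volume).setLIntegral_comp_preimage measurableSet_Iic hf]
    simpa using setLIntegral_congr Ioi_ae_eq_Ici.symm
  rw [lintegral_add_left hf, ← neg_part, ← compl_Ioi, lintegral_add_compl _ measurableSet_Ioi]

-- Fold onto `(0, ∞)`: since `H` covers all signs, it passes to `max (f x) (f (-x))`, and
-- `f x + f (-x)` is at most twice this maximum.
theorem prekopa_leindler_abs (hp : 0 < p) (hq : 0 < q) (hpq : p + q = 1)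
    (hf : Measurable f) (hg : Measurable g) (hh : Measurable h)
    (H : ∀ x y z, |z| = |x| ^ p * |y| ^ q → f x ^ p * g y ^ q ≤ h z) :
    (∫⁻ x, f x) ^ p * (∫⁻ x, g x) ^ q ≤ ∫⁻ x, h x := by
  simp only [lintegral_eq_lintegral_Ioi_add_neg, hf, hg, hh]
  refine prekopa_leindler_Ioi hp hq hpq (by fun_prop) (by fun_prop) (by fun_prop)
    fun x y hx hy ↦ ?_
  set z := x ^ p * y ^ q
  have hz : 0 < z := by positivity
  have max_le {w : ℝ} (hw : |w| = z) : max (f x) (f (-x)) ^ p * max (g y) (g (-y)) ^ q ≤ h w := by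
    rcases max_cases (f x) (f (-x)) with ⟨hx', -⟩ | ⟨hx', -⟩ <;>
    rcases max_cases (g y) (g (-y)) with ⟨hy', -⟩ | ⟨hy', -⟩ <;>
    · rw [hx', hy']
      exact H _ _ _ (by simpa [abs_of_pos hx, abs_of_pos hy] using hw)
  have add_le_two_mul_max (a b : ℝ≥0∞) : a + b ≤ 2 * max a b := by
    rw [two_mul]
    exact add_le_add (le_max_left a b) (le_max_right a b)
  calc (f x + f (-x)) ^ p * (g y + g (-y)) ^ q
      ≤ (2 * max (f x) (f (-x))) ^ p * (2 * max (g y) (g (-y))) ^ q := by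
        gcongr <;> exact add_le_two_mul_max _ _
    _ = 2 * (max (f x) (f (-x)) ^ p * max (g y) (g (-y)) ^ q) := by
        rw [ENNReal.mul_rpow_of_nonneg _ _ hp.le, ENNReal.mul_rpow_of_nonneg _ _ hq.le,
          mul_mul_mul_comm, ← ENNReal.rpow_add_of_nonneg _ _ hp.le hq.le, hpq, ENNReal.rpow_one]
    _ ≤ h z + h (-z) := by
        rw [two_mul]
        exact add_le_add (max_le (abs_of_pos hz)) (max_le (by rw [abs_neg, abs_of_pos hz]))

theorem prekopa_leindler_abs_pi {ι : Type*} [Fintype ι] {f g h : (ι → ℝ) → ℝ≥0∞}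
    (hp : 0 < p) (hq : 0 < q) (hpq : p + q = 1)
    (hf : Measurable f) (hg : Measurable g) (hh : Measurable h)
    (H : ∀ x y z, (∀ i, |z i| = |x i| ^ p * |y i| ^ q) → f x ^ p * g y ^ q ≤ h z) :
    (∫⁻ x, f x) ^ p * (∫⁻ x, g x) ^ q ≤ ∫⁻ x, h x := by
  classical
  let μ : ι → Measure ℝ := fun _ ↦ volume
  have marginal (s : Finset ι) (x y z : ι → ℝ) (hz : ∀ i, |z i| = |x i| ^ p * |y i| ^ q) :
      (∫⋯∫⁻_s, f ∂μ) x ^ p * (∫⋯∫⁻_s, g ∂μ) y ^ q ≤ (∫⋯∫⁻_s, h ∂μ) z := by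
    induction s using Finset.induction_on generalizing x y z with
    | empty => simpa using H x y z hz
    | insert i s hi ih =>
      simp only [lmarginal_insert _ _ hi, hf, hg, hh]
      have slice {u : (ι → ℝ) → ℝ≥0∞} (hu : Measurable u) (w : ι → ℝ) :
          Measurable fun t ↦ (∫⋯∫⁻_s, u ∂μ) (Function.update w i t) :=
        (hu.lmarginal μ).comp (measurable_update w)
      refine prekopa_leindler_abs hp hq hpq (slice hf x) (slice hg y) (slice hh z)
        fun a b c hc ↦ ih _ _ _ fun j ↦ ?_
      rcases eq_or_ne j i with rfl | hj
      · simpa using hc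
      · simpa [hj] using hz j
  simpa [μ, volume_pi] using marginal Finset.univ 0 0 0 (by simp [hp.ne'])

end PrekopaLeindler

section PowerInterpolation

variable {a b u v p q l₁ l₂ : ℝ}

lemma exists_eq_const_mul_rpow (ha : 0 < a) (hab : a < b) (hu : 0 < u) (huv : u ≤ v)
    (hv : v ≤ b / a * u) :
    ∃ s ∈ Icc (0 : ℝ) 1, ∃ K, 0 < K ∧ u = K * a ^ s ∧ v = K * b ^ s := by
  have hba : 0 < Real.log (b / a) := Real.log_pos ((one_lt_div ha).2 hab)
  have hvu : 0 < v / u := div_pos (hu.trans_le huv) hu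
  set s := Real.log (v / u) / Real.log (b / a)
  have rpow_s : (b / a) ^ s = v / u := by
    rw [Real.rpow_def_of_pos (div_pos (ha.trans hab) ha), mul_div_cancel₀ _ hba.ne',
      Real.exp_log hvu]
  have hs : s ∈ Icc (0 : ℝ) 1 :=
    ⟨div_nonneg (Real.log_nonneg ((one_le_div hu).2 huv)) hba.le,
      (div_le_one hba).2 (Real.log_le_log hvu ((div_le_iff₀ hu).2 hv))⟩
  refine ⟨s, hs, u / a ^ s, by positivity, by field_simp, ?_⟩
  rw [div_mul_eq_mul_div, mul_div_assoc, ← Real.div_rpow (ha.trans hab).le ha.le, rpow_s]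
  field_simp

lemma exists_rpow_mul_rpow_eq {c : ℝ} (ha : 0 < a) (hac : a < c) (hcb : c < b) :
    ∃ p q : ℝ, 0 < p ∧ 0 < q ∧ p + q = 1 ∧ a ^ p * b ^ q = c := by
  have hc : 0 < c := ha.trans hac
  have hb : 0 < b := hc.trans hcb
  have log_mem : Real.log c ∈ openSegment ℝ (Real.log a) (Real.log b) := by
    rw [openSegment_eq_Ioo (Real.log_lt_log ha (hac.trans hcb))]
    exact ⟨Real.log_lt_log ha hac, Real.log_lt_log hc hcb⟩
  obtain ⟨p, q, hp, hq, hpq, hlog⟩ := log_mem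
  refine ⟨p, q, hp, hq, hpq, ?_⟩
  rw [Real.rpow_def_of_pos ha, Real.rpow_def_of_pos hb, ← Real.exp_add, mul_comm _ p, mul_comm _ q,
    ← smul_eq_mul, ← smul_eq_mul, hlog, Real.exp_log hc]

lemma mul_add_mul_le_rpow_mul_rpow (ha : 0 < a) (hab : a < b) (hu : 0 < u) (huv : u ≤ v)
    (hv : v ≤ b / a * u) (hl₁ : 0 ≤ l₁) (hl₂ : 0 ≤ l₂) (hl : l₁ + l₂ = 1) (hpq : p + q = 1)
    (hmean : a ^ p * b ^ q = l₁ * a + l₂ * b) : l₁ * u + l₂ * v ≤ u ^ p * v ^ q := by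
  obtain ⟨s, ⟨hs₀, hs₁⟩, K, hK, rfl, rfl⟩ := exists_eq_const_mul_rpow ha hab hu huv hv
  have hb : 0 < b := ha.trans hab
  calc l₁ * (K * a ^ s) + l₂ * (K * b ^ s) = K * (l₁ * a ^ s + l₂ * b ^ s) := by ring
    _ ≤ K * (l₁ * a + l₂ * b) ^ s := by
        gcongr
        simpa using (Real.concaveOn_rpow hs₀ hs₁).2 ha.le hb.le hl₁ hl₂ hl
    _ = K ^ (p + q) * (a ^ p * b ^ q) ^ s := by rw [hpq, Real.rpow_one, hmean]
    _ = (K * a ^ s) ^ p * (K * b ^ s) ^ q := by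
        rw [Real.rpow_add hK, Real.mul_rpow (by positivity) (by positivity),
          Real.mul_rpow hK.le (by positivity), Real.mul_rpow hK.le (by positivity),
          ← Real.rpow_mul ha.le, ← Real.rpow_mul ha.le, ← Real.rpow_mul hb.le,
          ← Real.rpow_mul hb.le, mul_comm p, mul_comm q]
        ring

lemma ofReal_mul_add_ofReal_mul_le_rpow_mul_rpow {u v : ℝ≥0∞} (ha : 0 < a) (hab : a < b)
    (huv : u ≤ v) (hv : v ≤ ENNReal.ofReal (b / a) * u) (hl₁ : 0 ≤ l₁) (hl₂ : 0 ≤ l₂)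
    (hl : l₁ + l₂ = 1) (hp : 0 < p) (hq : 0 < q) (hpq : p + q = 1)
    (hmean : a ^ p * b ^ q = l₁ * a + l₂ * b) :
    ENNReal.ofReal l₁ * u + ENNReal.ofReal l₂ * v ≤ u ^ p * v ^ q := by
  rcases eq_or_ne u 0 with rfl | hu₀
  · simp_all
  rcases eq_or_ne u ⊤ with rfl | hu_top
  · simp [top_le_iff.1 huv, hp, hq]
  have hv_top : v ≠ ⊤ := ne_top_of_le_ne_top (by finiteness) hv
  have real_le := mul_add_mul_le_rpow_mul_rpow ha hab (ENNReal.toReal_pos hu₀ hu_top)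
    (ENNReal.toReal_mono hv_top huv) (v := v.toReal) ?_ hl₁ hl₂ hl hpq hmean
  · rw [← ENNReal.toReal_le_toReal (by finiteness) (by finiteness)]
    rw [ENNReal.toReal_add (by finiteness) (by finiteness)]
    simpa [ENNReal.toReal_rpow, hl₁, hl₂] using real_le
  · have := ENNReal.toReal_mono (by finiteness) hv
    rwa [ENNReal.toReal_mul, ENNReal.toReal_ofReal (div_pos (ha.trans hab) ha).le] at this

theorem ofReal_mul_add_ofReal_mul_le_of_rpow_mul_rpow_le {F : ℝ → ℝ≥0∞}
    (mono : ∀ a b, 0 < a → a ≤ b → F a ≤ F b)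
    (growth : ∀ a b, 0 < a → a ≤ b → F b ≤ ENNReal.ofReal (b / a) * F a)
    (geom : ∀ a b p q : ℝ, 0 < a → 0 < b → 0 < p → 0 < q → p + q = 1 →
      F a ^ p * F b ^ q ≤ F (a ^ p * b ^ q))
    (ha : 0 < a) (hb : 0 < b) (hl₁ : 0 ≤ l₁) (hl₂ : 0 ≤ l₂) (hl : l₁ + l₂ = 1) :
    ENNReal.ofReal l₁ * F a + ENNReal.ofReal l₂ * F b ≤ F (l₁ * a + l₂ * b) := by
  wlog hab : a ≤ b generalizing a b l₁ l₂
  · rw [add_comm, add_comm (l₁ * a)]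
    exact this hb ha hl₂ hl₁ (by rwa [add_comm]) (le_of_not_ge hab)
  rcases hab.eq_or_lt with rfl | hab
  · rw [← add_mul, ← add_mul, ← ENNReal.ofReal_add hl₁ hl₂, hl, ENNReal.ofReal_one, one_mul,
      one_mul]
  rcases hl₁.eq_or_lt with rfl | hl₁'
  · simp_all
  rcases hl₂.eq_or_lt with rfl | hl₂'
  · simp_all
  obtain ⟨p, q, hp, hq, hpq, hmean⟩ : ∃ p q : ℝ, 0 < p ∧ 0 < q ∧ p + q = 1 ∧
      a ^ p * b ^ q = l₁ * a + l₂ * b :=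
    exists_rpow_mul_rpow_eq ha (by nlinarith) (by nlinarith)
  exact hmean ▸ (ofReal_mul_add_ofReal_mul_le_rpow_mul_rpow ha hab (mono a b ha hab.le)
    (growth a b ha hab.le) hl₁ hl₂ hl hp hq hpq hmean).trans (geom a b p q ha hb hp hq hpq)

end PowerInterpolation

lemma withDensity_smul_le_ofReal_pow_mul {E : Type*} [NormedAddCommGroup E] [NormedSpace ℝ E]
    [FiniteDimensional ℝ E] [MeasurableSpace E] [BorelSpace E] (μ : Measure E)
    [μ.IsAddHaarMeasure] {φ : E → ℝ≥0∞} (hφ : Measurable φ) {r : ℝ} (hr : 0 < r)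
    (h : ∀ x, φ (r • x) ≤ φ x) {s : Set E} (hs : MeasurableSet s) :
    μ.withDensity φ (r • s) ≤
      ENNReal.ofReal (r ^ Module.finrank ℝ E) * μ.withDensity φ s := by
  have hrs : r • s = (r⁻¹ • ·) ⁻¹' s := (preimage_smul_inv₀ hr.ne' s).symm
  have map_eq : μ.map (r⁻¹ • ·) = ENNReal.ofReal (r ^ Module.finrank ℝ E) • μ := by
    rw [Measure.map_addHaar_smul μ (inv_ne_zero hr.ne'), inv_pow, inv_inv,
      abs_of_pos (by positivity)]
  calc μ.withDensity φ (r • s) = ∫⁻ x in r • s, φ (r • (r⁻¹ • x)) ∂μ := by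
        simp [withDensity_apply _ (hs.const_smul₀ r), smul_inv_smul₀ hr.ne']
    _ ≤ ∫⁻ x in r • s, φ (r⁻¹ • x) ∂μ := lintegral_mono fun x ↦ h _
    _ = ∫⁻ x in s, φ x ∂(μ.map (r⁻¹ • ·)) := by
        rw [hrs, setLIntegral_map hs hφ (by fun_prop)]
    _ = ENNReal.ofReal (r ^ Module.finrank ℝ E) * μ.withDensity φ s := by
        rw [map_eq, Measure.restrict_smul, lintegral_smul_measure, smul_eq_mul,
          withDensity_apply _ hs]

section Solid

variable {ι : Type*} {p q : ℝ}

/-- Solid, geometrically convex sets, the real counterpart of logarithmically convex complete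
Reinhardt domains: the form in which the symmetry and convexity of `A` enter the multiplicative
argument. The condition on `z` bounds `|z i|` from above only, which makes `A` invariant under
sign changes and under shrinking coordinates. -/
def SolidGeomConvex (A : Set (ι → ℝ)) : Prop :=
  ∀ ⦃x⦄, x ∈ A → ∀ ⦃y⦄, y ∈ A → ∀ ⦃p q : ℝ⦄, 0 < p → 0 < q → p + q = 1 →
    ∀ ⦃z : ι → ℝ⦄, (∀ i, |z i| ≤ |x i| ^ p * |y i| ^ q) → z ∈ A

/-- Densities satisfying the functional form of `SolidGeomConvex`: the superlevel sets are solid,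
and `φ` is log-concave with respect to coordinatewise weighted geometric means. -/
def SolidGeomLogConcave (φ : (ι → ℝ) → ℝ≥0∞) : Prop :=
  ∀ ⦃x y z : ι → ℝ⦄ ⦃p q : ℝ⦄, 0 < p → 0 < q → p + q = 1 →
    (∀ i, |z i| ≤ |x i| ^ p * |y i| ^ q) → φ x ^ p * φ y ^ q ≤ φ z

variable {A : Set (ι → ℝ)} {φ : (ι → ℝ) → ℝ≥0∞}

lemma rpow_one_half_mul_self {t : ℝ} (ht : 0 ≤ t) : t ^ (1 / 2 : ℝ) * t ^ (1 / 2 : ℝ) = t := by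
  rw [← Real.sqrt_eq_rpow, Real.mul_self_sqrt ht]

lemma SolidGeomConvex.mem_of_abs_le (hA : SolidGeomConvex A) {x y : ι → ℝ} (hx : x ∈ A)
    (hyx : ∀ i, |y i| ≤ |x i|) : y ∈ A :=
  hA hx hx one_half_pos one_half_pos (add_halves 1) fun i ↦
    (hyx i).trans_eq (rpow_one_half_mul_self (abs_nonneg _)).symm

lemma SolidGeomConvex.balanced (hA : SolidGeomConvex A) : Balanced ℝ A := by
  rintro c hc _ ⟨x, hx, rfl⟩
  refine hA.mem_of_abs_le hx fun i ↦ ?_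
  simpa [abs_mul] using mul_le_mul_of_nonneg_right hc (abs_nonneg (x i))

lemma SolidGeomConvex.smul_subset_smul (hA : SolidGeomConvex A)
    {a b : ℝ} (ha : 0 < a) (hab : a ≤ b) : a • A ⊆ b • A :=
  hA.balanced.smul_mono (by rwa [Real.norm_of_nonneg ha.le, Real.norm_of_nonneg (ha.le.trans hab)])

lemma SolidGeomLogConcave.le_of_abs_le (hφ : SolidGeomLogConcave φ) {x y : ι → ℝ}
    (hyx : ∀ i, |y i| ≤ |x i|) : φ x ≤ φ y := by
  have := hφ (x := x) (y := x) (z := y) one_half_pos one_half_pos (add_halves 1) fun i ↦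
    (hyx i).trans_eq (rpow_one_half_mul_self (abs_nonneg _)).symm
  rwa [← ENNReal.rpow_add_of_nonneg _ _ (by norm_num) (by norm_num), add_halves,
    ENNReal.rpow_one] at this

lemma SolidGeomConvex.mem_smul (hA : SolidGeomConvex A) {a b : ℝ} (ha : 0 < a) (hb : 0 < b)
    (hp : 0 < p) (hq : 0 < q) (hpq : p + q = 1) {x y z : ι → ℝ} (hx : x ∈ a • A) (hy : y ∈ b • A)
    (hz : ∀ i, |z i| ≤ |x i| ^ p * |y i| ^ q) : z ∈ (a ^ p * b ^ q) • A := by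
  obtain ⟨x, hx, rfl⟩ := hx
  obtain ⟨y, hy, rfl⟩ := hy
  have hc : 0 < a ^ p * b ^ q := by positivity
  rw [mem_smul_set_iff_inv_smul_mem₀ hc.ne']
  refine hA hx hy hp hq hpq fun i ↦ ?_
  calc |((a ^ p * b ^ q)⁻¹ • z) i| = (a ^ p * b ^ q)⁻¹ * |z i| := by
        rw [Pi.smul_apply, smul_eq_mul, abs_mul, abs_of_pos (inv_pos.2 hc)]
    _ ≤ (a ^ p * b ^ q)⁻¹ * (|a * x i| ^ p * |b * y i| ^ q) := by
        gcongr
        exact hz i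
    _ = |x i| ^ p * |y i| ^ q := by
        rw [abs_mul, abs_mul, abs_of_pos ha, abs_of_pos hb,
          Real.mul_rpow ha.le (abs_nonneg _), Real.mul_rpow hb.le (abs_nonneg _)]
        field_simp

variable [Fintype ι]

theorem SolidGeomConvex.withDensity_smul_rpow_mul_le (hA : SolidGeomConvex A)
    (hA_meas : MeasurableSet A) (hφ : SolidGeomLogConcave φ) (hφ_meas : Measurable φ)
    {a b : ℝ} (ha : 0 < a) (hb : 0 < b) (hp : 0 < p) (hq : 0 < q) (hpq : p + q = 1) :
    volume.withDensity φ (a • A) ^ p * volume.withDensity φ (b • A) ^ q ≤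
      volume.withDensity φ ((a ^ p * b ^ q) • A) := by
  have smul_meas (c : ℝ) : MeasurableSet (c • A) := hA_meas.const_smul₀ c
  simp only [withDensity_apply _ (smul_meas _), ← lintegral_indicator (smul_meas _)]
  refine prekopa_leindler_abs_pi hp hq hpq (hφ_meas.indicator (smul_meas a))
    (hφ_meas.indicator (smul_meas b)) (hφ_meas.indicator (smul_meas _)) fun x y z hz ↦ ?_
  by_cases hx : x ∈ a • A; swap
  · simp [hx, hp]
  by_cases hy : y ∈ b • A; swap
  · simp [hy, hq]
  rw [indicator_of_mem hx, indicator_of_mem hy,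
    indicator_of_mem (hA.mem_smul ha hb hp hq hpq hx hy fun i ↦ (hz i).le)]
  exact hφ hp hq hpq fun i ↦ (hz i).le

lemma SolidGeomLogConcave.withDensity_smul_le (hφ : SolidGeomLogConcave φ)
    (hφ_meas : Measurable φ) (hA_meas : MeasurableSet A) {a b : ℝ} (ha : 0 < a) (hab : a ≤ b) :
    volume.withDensity φ (b • A) ≤
      ENNReal.ofReal (b / a) ^ Fintype.card ι * volume.withDensity φ (a • A) := by
  have hba : 1 ≤ b / a := (one_le_div ha).2 hab
  have smul_le (x : ι → ℝ) : φ ((b / a) • x) ≤ φ x := hφ.le_of_abs_le fun i ↦ by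
    simpa [abs_mul] using le_mul_of_one_le_left (abs_nonneg (x i)) (hba.trans (le_abs_self _))
  simpa [smul_smul, div_mul_cancel₀ b ha.ne', ENNReal.ofReal_pow (zero_le_one.trans hba)] using
    withDensity_smul_le_ofReal_pow_mul volume hφ_meas (zero_lt_one.trans_le hba) smul_le
      (hA_meas.const_smul₀ a)

end Solid

section Convex

variable {ι : Type*} [Finite ι]

lemma mem_of_abs_le_of_convex_of_sign_invariant {A : Set (ι → ℝ)} (hA : Convex ℝ A)
    (hsign : ∀ ε : ι → ℝ, (∀ i, ε i = 1 ∨ ε i = -1) → ∀ x ∈ A, (fun i ↦ ε i * x i) ∈ A)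
    {x y : ι → ℝ} (hy : y ∈ A) (hxy : ∀ i, |x i| ≤ |y i|) : x ∈ A := by
  have vertices_subset : univ.pi (fun i ↦ {y i, -y i}) ⊆ A := by
    intro w hw
    have hw (i : ι) : w i = y i ∨ w i = -y i := by simpa using hw i (mem_univ i)
    choose ε hε hwε using fun i ↦ show ∃ ε : ℝ, (ε = 1 ∨ ε = -1) ∧ ε * y i = w i by
      rcases hw i with h | h
      · exact ⟨1, .inl rfl, by simp [h]⟩
      · exact ⟨-1, .inr rfl, by simp [h]⟩
    simpa [hwε] using hsign ε hε y hy
  refine convexHull_min vertices_subset hA ?_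
  rw [convexHull_pi]
  intro i _
  beta_reduce
  rw [convexHull_pair, segment_eq_uIcc, mem_uIcc]
  have := abs_le.1 (hxy i)
  rcases abs_cases (y i) with ⟨h, -⟩ | ⟨h, -⟩ <;> rw [h] at this
  · exact .inr this
  · exact .inl (by simpa using this)

lemma abs_le_abs_mul_add_of_le_rpow_mul_rpow {p q s t u : ℝ} (hp : 0 ≤ p) (hq : 0 ≤ q)
    (hpq : p + q = 1) (hu : |u| ≤ |s| ^ p * |t| ^ q) : |u| ≤ abs (p * |s| + q * |t|) :=
  hu.trans <| (Real.geom_mean_le_arith_mean2_weighted hp hq (abs_nonneg s) (abs_nonneg t) hpq).trans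
    (le_abs_self _)

lemma solidGeomConvex_of_convex {A : Set (ι → ℝ)} (hA : Convex ℝ A)
    (hsign : ∀ ε : ι → ℝ, (∀ i, ε i = 1 ∨ ε i = -1) → ∀ x ∈ A, (fun i ↦ ε i * x i) ∈ A) :
    SolidGeomConvex A := by
  have abs_mem {x : ι → ℝ} (hx : x ∈ A) : |x| ∈ A :=
    mem_of_abs_le_of_convex_of_sign_invariant hA hsign hx fun i ↦ by simp
  intro x hx y hy p q hp hq hpq z hz
  refine mem_of_abs_le_of_convex_of_sign_invariant hA hsign
    (hA (abs_mem hx) (abs_mem hy) hp.le hq.le hpq) fun i ↦ ?_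
  exact abs_le_abs_mul_add_of_le_rpow_mul_rpow hp.le hq.le hpq (hz i)

lemma solidGeomLogConcave_ofReal {φ : (ι → ℝ) → ℝ} (hφ₀ : ∀ x, 0 ≤ φ x)
    (hsign : ∀ ε : ι → ℝ, (∀ i, ε i = 1 ∨ ε i = -1) → ∀ x, φ (fun i ↦ ε i * x i) = φ x)
    (hφ : ∀ x y, ∀ p q : ℝ, 0 < p → 0 < q → p + q = 1 → φ x ^ p * φ y ^ q ≤ φ (p • x + q • y)) :
    SolidGeomLogConcave fun x ↦ ENNReal.ofReal (φ x) := by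
  have antitone {x y : ι → ℝ} (hxy : ∀ i, |x i| ≤ |y i|) : φ y ≤ φ x := by
    have superlevel_convex : Convex ℝ {z | φ y ≤ φ z} := by
      refine convex_iff_forall_pos.2 fun z hz w hw p q hp hq hpq ↦ ?_
      calc φ y = φ y ^ p * φ y ^ q := by
            rw [← Real.rpow_add_of_nonneg (hφ₀ y) hp.le hq.le, hpq, Real.rpow_one]
        _ ≤ φ z ^ p * φ w ^ q :=
            mul_le_mul (Real.rpow_le_rpow (hφ₀ y) hz hp.le) (Real.rpow_le_rpow (hφ₀ y) hw hq.le)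
              (Real.rpow_nonneg (hφ₀ y) q) (Real.rpow_nonneg (hφ₀ z) p)
        _ ≤ φ (p • z + q • w) := hφ z w p q hp hq hpq
    exact mem_of_abs_le_of_convex_of_sign_invariant superlevel_convex
      (fun ε hε z hz ↦ hz.trans (hsign ε hε z).ge) (le_refl (φ y)) hxy
  have abs_eq (x : ι → ℝ) : φ |x| = φ x :=
    (antitone fun i ↦ by simp).antisymm (antitone fun i ↦ by simp)
  intro x y z p q hp hq hpq hz
  rw [ENNReal.ofReal_rpow_of_nonneg (hφ₀ x) hp.le, ENNReal.ofReal_rpow_of_nonneg (hφ₀ y) hq.le,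
    ← ENNReal.ofReal_mul (Real.rpow_nonneg (hφ₀ x) p)]
  refine ENNReal.ofReal_le_ofReal ?_
  calc φ x ^ p * φ y ^ q = φ |x| ^ p * φ |y| ^ q := by rw [abs_eq, abs_eq]
    _ ≤ φ (p • |x| + q • |y|) := hφ _ _ p q hp hq hpq
    _ ≤ φ z := antitone fun i ↦
        abs_le_abs_mul_add_of_le_rpow_mul_rpow hp.le hq.le hpq (hz i)

end Convex

theorem stmt1_general {ι : Type*} [Fintype ι] [Nonempty ι] {φ : (ι → ℝ) → ℝ≥0∞}
    (hφ : SolidGeomLogConcave φ) (hφ_meas : Measurable φ) {A : Set (ι → ℝ)}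
    (hA : SolidGeomConvex A) (hA_meas : MeasurableSet A) {a b l₁ l₂ : ℝ} (ha : 0 < a) (hb : 0 < b)
    (hl₁ : 0 ≤ l₁) (hl₂ : 0 ≤ l₂) (hl : l₁ + l₂ = 1) :
    ENNReal.ofReal l₁ * volume.withDensity φ (a • A) ^ (1 / (Fintype.card ι : ℝ)) +
        ENNReal.ofReal l₂ * volume.withDensity φ (b • A) ^ (1 / (Fintype.card ι : ℝ)) ≤
      volume.withDensity φ (l₁ • (a • A) + l₂ • (b • A)) ^ (1 / (Fintype.card ι : ℝ)) := by
  set r : ℝ := 1 / Fintype.card ι with hr_def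
  have hr : 0 ≤ r := by positivity
  have subset : (l₁ * a + l₂ * b) • A ⊆ l₁ • (a • A) + l₂ • (b • A) := by
    simpa only [smul_smul] using add_smul_subset (l₁ * a) (l₂ * b) A
  refine (ofReal_mul_add_ofReal_mul_le_of_rpow_mul_rpow_le
    (F := fun t ↦ volume.withDensity φ (t • A) ^ r) ?mono ?growth ?geom ha hb hl₁ hl₂ hl).trans
    (by gcongr)
  case mono =>
    intro a b ha hab
    gcongr
    exact hA.smul_subset_smul ha hab
  case growth =>
    intro a b ha hab
    calc volume.withDensity φ (b • A) ^ r
        ≤ (ENNReal.ofReal (b / a) ^ Fintype.card ι * volume.withDensity φ (a • A)) ^ r := by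
          gcongr
          exact hφ.withDensity_smul_le hφ_meas hA_meas ha hab
      _ = ENNReal.ofReal (b / a) * volume.withDensity φ (a • A) ^ r := by
          rw [ENNReal.mul_rpow_of_nonneg _ _ hr, hr_def, one_div,
            ENNReal.pow_rpow_inv_natCast Fintype.card_ne_zero]
  case geom =>
    intro a b p q ha hb hp hq hpq
    simp only [← ENNReal.rpow_mul, mul_comm r]
    simp only [ENNReal.rpow_mul, ← ENNReal.mul_rpow_of_nonneg _ _ hr]
    gcongr
    exact hA.withDensity_smul_rpow_mul_le hA_meas hφ hφ_meas ha hb hp hq hpq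

/-- For μ an unconditional log-concave measure on ℝⁿ and A an unconditional
convex set, for all α₁, α₂ > 0 and l ∈ [0,1],
μ((1-l)α₁A + lα₂A)^{1/n} ≥ (1-l)μ(α₁A)^{1/n} + lμ(α₂A)^{1/n}. -/
theorem stmt1 (n : ℕ) (hn : 0 < n) (φ : (Fin n → ℝ) → ℝ)
    (hφmeas : Measurable φ) (hφpos : ∀ x, 0 ≤ φ x)
    (hφuncond : Unconditional n φ)
    (hφlogconcave : ∀ x y : Fin n → ℝ, ∀ l : ℝ, l ∈ Set.Icc (0:ℝ) 1 →
      φ ((1 - l) • x + l • y) ≥ φ x ^ (1 - l) * φ y ^ l)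
    (μ : Measure (Fin n → ℝ))
    (hμ : μ = volume.withDensity (fun x => ENNReal.ofReal (φ x)))
    (A : Set (Fin n → ℝ)) (hA : MeasurableSet A) (hAconv : Convex ℝ A)
    (hAuncond : ∀ (ε : Fin n → ℝ), (∀ i, ε i = 1 ∨ ε i = -1) →
      ∀ x : Fin n → ℝ, ((fun i => ε i * x i) ∈ A ↔ x ∈ A))
    (α₁ α₂ : ℝ) (hα₁ : 0 < α₁) (hα₂ : 0 < α₂)
    (l : ℝ) (hl : l ∈ Set.Icc (0:ℝ) 1) :
    (μ ((1 - l) • (α₁ • A) + l • (α₂ • A))) ^ (1 / (n : ℝ)) ≥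
      ENNReal.ofReal (1 - l) * (μ (α₁ • A)) ^ (1 / (n : ℝ)) +
      ENNReal.ofReal l * (μ (α₂ • A)) ^ (1 / (n : ℝ)) := by
  have : NeZero n := ⟨hn.ne'⟩
  have hφ_solid : SolidGeomLogConcave fun x ↦ ENNReal.ofReal (φ x) :=
    solidGeomLogConcave_ofReal hφpos hφuncond fun x y p q hp hq hpq ↦ by
      obtain rfl : p = 1 - q := eq_sub_of_add_eq hpq
      exact hφlogconcave x y q ⟨hq.le, sub_nonneg.1 hp.le⟩
  have hA_solid : SolidGeomConvex A :=
    solidGeomConvex_of_convex hAconv fun ε hε x ↦ (hAuncond ε hε x).2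
  simpa [hμ] using stmt1_general hφ_solid (by fun_prop) hA_solid hA hα₁ hα₂
    (sub_nonneg.2 hl.2) hl.1 (sub_add_cancel 1 l)
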